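/- If two entire functions of exponential type at most 1 have exactly the same zeros (with multiplicities) and their ratio tends to 1 along some ray to infinity, then the two functions are identically equal. -/

import Mathlib

open Complex Filter

/-- Quotient of entire functions with the same zeros. -/
lemma exists_quotient (f g : ℂ → ℂ)
    (hf : Differentiable ℂ f) (hg : Differentiable ℂ g) (hg0 : g ≠ 0)
    (hzeros : ∀ z : ℂ, ∀ n : ℕ,
      ((∀ k ≤ n, iteratedDeriv k f z = 0) ↔ (∀ k ≤ n, iteratedDeriv k g z = 0))) :
    ∃ q : ℂ → ℂ, Differentiable ℂ q ∧ (∀ z, q z ≠ 0) ∧ ∀ z, f z = q z * g z := by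
  have hfa : ∀ z, AnalyticAt ℂ f z := fun z => hf.analyticAt z
  have hga : ∀ z, AnalyticAt ℂ g z := fun z => hg.analyticAt z
  have hord : ∀ z, analyticOrderAt f z = analyticOrderAt g z := by
    intro z
    refine ENat.eq_of_forall_natCast_le_iff fun n => ?_
    rw [natCast_le_analyticOrderAt_iff_iteratedDeriv_eq_zero (hfa z),
      natCast_le_analyticOrderAt_iff_iteratedDeriv_eq_zero (hga z)]
    cases n with
    | zero => simp
    | succ n => simpa [Nat.lt_succ_iff] using hzeros z n
  have hgt : ∀ z, analyticOrderAt g z ≠ ⊤ := by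
    intro z hz
    apply hg0
    rw [analyticOrderAt_eq_top] at hz
    exact AnalyticOnNhd.eq_of_eventuallyEq (fun x _ => hga x)
      (fun x _ => analyticAt_const) (z₀ := z) hz
  have hmer : MeromorphicOn (f / g) Set.univ := fun z _ =>
    (hfa z).meromorphicAt.div (hga z).meromorphicAt
  have hmo : ∀ z, meromorphicOrderAt (f / g) z = 0 := by
    intro z
    rw [meromorphicOrderAt_div (hfa z).meromorphicAt (hga z).meromorphicAt,
      (hfa z).meromorphicOrderAt_eq, (hga z).meromorphicOrderAt_eq, hord z]
    obtain ⟨n, hn⟩ := ENat.ne_top_iff_exists.mp (hgt z)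
    rw [← hn]
    simp only [ENat.map_natCast]
    exact_mod_cast sub_self (n : ℤ)
  set q := toMeromorphicNFOn (f / g) Set.univ with hq
  have hNF : MeromorphicNFOn q Set.univ := meromorphicNFOn_toMeromorphicNFOn _ _
  have hqo : ∀ z, meromorphicOrderAt q z = 0 := fun z => by
    rw [hq, meromorphicOrderAt_toMeromorphicNFOn hmer (Set.mem_univ z), hmo z]
  have hqa : ∀ z, AnalyticAt ℂ q z := fun z =>
    (hNF (Set.mem_univ z)).meromorphicOrderAt_nonneg_iff_analyticAt.mp (hqo z).ge
  refine ⟨q, fun z => (hqa z).differentiableAt, fun z =>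
    (hNF (Set.mem_univ z)).meromorphicOrderAt_eq_zero_iff.mp (hqo z), fun z => ?_⟩
  have h1 : ∀ᶠ w in nhdsWithin z {z}ᶜ, f w = (q * g) w := by
    have hgne : ∀ᶠ w in nhdsWithin z {z}ᶜ, g w ≠ 0 := by
      rcases (hga z).eventually_eq_zero_or_eventually_ne_zero with h | h
      · exact absurd (analyticOrderAt_eq_top.mpr h) (hgt z)
      · exact h
    filter_upwards [hgne, hmer.toMeromorphicNFOn_eq_self_on_nhdsNE (Set.mem_univ z)] with w hw hw'
    rw [Pi.mul_apply, show q w = (f / g) w from hw', Pi.div_apply, div_mul_cancel₀ _ hw]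
  have hc1 : Tendsto f (nhdsWithin z {z}ᶜ) (nhds (f z)) :=
    (hfa z).continuousAt.tendsto.mono_left nhdsWithin_le_nhds
  have hc2 : Tendsto (q * g) (nhdsWithin z {z}ᶜ) (nhds ((q * g) z)) :=
    ((hqa z).mul (hga z)).continuousAt.tendsto.mono_left nhdsWithin_le_nhds
  exact tendsto_nhds_unique hc1 (hc2.congr' (h1.mono fun w hw => hw.symm))

/-- An entire function without zeros is an exponential. -/
lemma exists_entire_log (q : ℂ → ℂ) (hq : Differentiable ℂ q) (hq0 : ∀ z, q z ≠ 0) :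
    ∃ h : ℂ → ℂ, Differentiable ℂ h ∧ ∀ z, q z = Complex.exp (h z) := by
  have hd : Differentiable ℂ (fun z => deriv q z / q z) :=
    Differentiable.div (fun z => (hq.analyticAt z).deriv.differentiableAt) hq hq0
  obtain ⟨h, hh⟩ := hd.isExactOn_univ
  have hh' : ∀ z, HasDerivAt h (deriv q z / q z) z := fun z => hh z (Set.mem_univ z)
  have hD : ∀ z, HasDerivAt (fun z => q z * Complex.exp (-h z)) 0 z := by
    intro z
    refine ((hq z).hasDerivAt.mul ((hh' z).neg.cexp)).congr_deriv ?_
    have h1 : q z * (deriv q z / q z) = deriv q z := mul_div_cancel₀ _ (hq0 z)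
    simp only [Pi.neg_apply]
    linear_combination -Complex.exp (-h z) * h1
  have hconst : ∀ z, q z * Complex.exp (-h z) = q 0 * Complex.exp (-h 0) := fun z =>
    is_const_of_deriv_eq_zero (fun z => (hD z).differentiableAt) (fun z => (hD z).deriv) z 0
  have hc0 : q 0 * Complex.exp (-h 0) ≠ 0 := mul_ne_zero (hq0 0) (Complex.exp_ne_zero _)
  refine ⟨fun z => h z + Complex.log (q 0 * Complex.exp (-h 0)),
    fun z => (hh' z).differentiableAt.add_const _, fun z => ?_⟩
  rw [Complex.exp_add, Complex.exp_log hc0, ← hconst z, mul_comm, mul_assoc, ← Complex.exp_add]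
  simp

/-- Jensen: lower bound on circle averages. -/
lemma exists_lower_circleAverage (g : ℂ → ℂ) (hg : Differentiable ℂ g) :
    ∃ K : ℝ, 0 ≤ K ∧ ∀ R : ℝ, 1 ≤ R → -K ≤ Real.circleAverage (fun z => Real.log ‖g z‖) 0 R := by
  refine ⟨|Real.log ‖meromorphicTrailingCoeffAt g 0‖|, abs_nonneg _, fun R hR => ?_⟩
  have hR0 : 0 < R := by linarith
  have ha : AnalyticOnNhd ℂ g (Metric.closedBall 0 |R|) := fun z _ => hg.analyticAt z
  rw [MeromorphicOn.circleAverage_log_norm hR0.ne' ha.meromorphicOn]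
  have hdiv := MeromorphicOn.AnalyticOnNhd.divisor_nonneg ha
  have h1 : 0 ≤ ∑ᶠ u, (MeromorphicOn.divisor g (Metric.closedBall 0 |R|) u : ℝ) *
      Real.log (R * ‖0 - u‖⁻¹) := by
    refine finsum_nonneg fun u => ?_
    by_cases hu : u ∈ Metric.closedBall (0 : ℂ) |R|
    · refine mul_nonneg (by exact_mod_cast hdiv u) ?_
      rcases eq_or_ne u 0 with rfl | hu0
      · simp
      · apply Real.log_nonneg
        have hp : 0 < ‖u‖ := norm_pos_iff.mpr hu0
        rw [zero_sub, norm_neg, ← div_eq_mul_inv, le_div_iff₀ hp, one_mul]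
        simpa [abs_of_pos hR0] using hu
    · simp [hu]
  have h2 : 0 ≤ (MeromorphicOn.divisor g (Metric.closedBall 0 |R|) 0 : ℝ) * Real.log R :=
    mul_nonneg (by exact_mod_cast hdiv 0) (Real.log_nonneg hR)
  have h3 := neg_abs_le (Real.log ‖meromorphicTrailingCoeffAt g 0‖)
  linarith

lemma exists_log_bound (f : ℂ → ℂ)
    (hftype : ∃ C A : ℝ, ∀ z : ℂ, ‖f z‖ ≤ C * Real.exp (A * ‖z‖)) :
    ∃ B : ℝ, 0 ≤ B ∧ ∀ z : ℂ, Real.log ‖f z‖ ≤ B * (1 + ‖z‖) := by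
  obtain ⟨C, A, h⟩ := hftype
  refine ⟨|Real.log (|C| + 1)| + |A|, by positivity, fun z => ?_⟩
  have hz := norm_nonneg z
  rcases eq_or_ne (f z) 0 with h0 | h0
  · rw [h0, norm_zero, Real.log_zero]; positivity
  have h1 : ‖f z‖ ≤ (|C| + 1) * Real.exp (A * ‖z‖) :=
    (h z).trans (mul_le_mul_of_nonneg_right (by linarith [le_abs_self C]) (Real.exp_nonneg _))
  have h2 := Real.log_le_log (norm_pos_iff.mpr h0) h1
  rw [Real.log_mul (by positivity) (Real.exp_ne_zero _), Real.log_exp] at h2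
  have h3 := le_abs_self (Real.log (|C| + 1))
  have h4 : A * ‖z‖ ≤ |A| * ‖z‖ := mul_le_mul_of_nonneg_right (le_abs_self A) hz
  nlinarith [mul_nonneg (abs_nonneg (Real.log (|C| + 1))) hz, abs_nonneg A]

lemma log_quotient_bound (f g q : ℂ → ℂ)
    (hf : Differentiable ℂ f) (hg : Differentiable ℂ g) (hg0 : g ≠ 0)
    (hq : Differentiable ℂ q) (hq0 : ∀ z, q z ≠ 0) (hfq : ∀ z, f z = q z * g z)
    (hftype : ∃ C A : ℝ, ∀ z : ℂ, ‖f z‖ ≤ C * Real.exp (A * ‖z‖))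
    (hgtype : ∃ C A : ℝ, ∀ z : ℂ, ‖g z‖ ≤ C * Real.exp (A * ‖z‖)) :
    ∃ K : ℝ, 0 < K ∧ ∀ R : ℝ, 1 ≤ R → ∀ w : ℂ, ‖w‖ ≤ R / 2 → Real.log ‖q w‖ ≤ K * (1 + R) := by
  obtain ⟨K, hK0, hK⟩ := exists_lower_circleAverage g hg
  obtain ⟨B₁, hB₁0, hB₁⟩ := exists_log_bound f hftype
  obtain ⟨B₂, hB₂0, hB₂⟩ := exists_log_bound g hgtype
  refine ⟨3 * (B₁ + B₂ + K) + 1, by positivity, fun R hR w hw => ?_⟩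
  have hR0 : 0 < R := by linarith
  have habs : |R| = R := abs_of_pos hR0
  have hwb : w ∈ Metric.ball (0 : ℂ) R := by
    rw [mem_ball_zero_iff]; linarith
  have hharm : InnerProductSpace.HarmonicOnNhd (fun z => Real.log ‖q z‖)
      (Metric.closedBall 0 R) := fun x _ => (hq.analyticAt x).harmonicAt_log_norm (hq0 x)
  have hP := hharm.circleAverage_re_herglotzRieszKernel_smul hwb
  have hfi : CircleIntegrable (fun z => Real.log ‖f z‖) 0 R :=
    MeromorphicOn.circleIntegrable_log_norm fun z _ => (hf.analyticAt z).meromorphicAt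
  have hgi : CircleIntegrable (fun z => Real.log ‖g z‖) 0 R :=
    MeromorphicOn.circleIntegrable_log_norm fun z _ => (hg.analyticAt z).meromorphicAt
  have hqi : CircleIntegrable (fun z => Real.log ‖q z‖) 0 R :=
    MeromorphicOn.circleIntegrable_log_norm fun z _ => (hq.analyticAt z).meromorphicAt
  set P : ℂ → ℝ := Complex.re ∘ herglotzRieszKernel 0 w with hPdef
  have hPc : ContinuousOn P (Metric.sphere 0 |R|) :=
    Complex.continuous_re.comp_continuousOn (continuousOn_herglotzRieszKernel_sphere hwb)
  have hgne : ∀ᶠ z in codiscreteWithin (Metric.sphere (0 : ℂ) |R|), g z ≠ 0 := by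
    have : ∀ᶠ z in codiscreteWithin (Set.univ : Set ℂ), g z ≠ 0 := by
      rcases AnalyticOnNhd.eqOn_zero_or_eventually_ne_zero_of_preconnected
        (fun x _ => hg.analyticAt x : AnalyticOnNhd ℂ g Set.univ) isPreconnected_univ with h | h
      · exact absurd (funext fun z => h (Set.mem_univ z)) hg0
      · exact h
    exact this.filter_mono (Filter.codiscreteWithin_mono (Set.subset_univ _))
  have hcongr : Real.circleAverage (P • fun z => Real.log ‖q z‖) 0 R =
      Real.circleAverage (P • fun z => Real.log ‖f z‖ - Real.log ‖g z‖) 0 R := by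
    refine Real.circleAverage_congr_codiscreteWithin ?_ hR0.ne'
    filter_upwards [hgne] with z hz
    simp only [Pi.smul_apply', hfq z, norm_mul]
    rw [Real.log_mul (norm_ne_zero_iff.mpr (hq0 z)) (norm_ne_zero_iff.mpr hz)]
    ring_nf
  set M := (B₁ + B₂) * (1 + R) with hM
  have hci : CircleIntegrable (fun z => M - Real.log ‖g z‖) 0 R :=
    (circleIntegrable_const M 0 R).sub hgi
  have hle : Real.circleAverage (P • fun z => Real.log ‖f z‖ - Real.log ‖g z‖) 0 R ≤
      Real.circleAverage ((3 : ℝ) • fun z => M - Real.log ‖g z‖) 0 R := by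
    refine Real.circleAverage_mono ((hfi.sub hgi).continuousOn_smul hPc) (hci.const_smul) ?_
    intro z hz
    have hzR : ‖z‖ = R := by simpa [habs] using hz
    have hz' : z ∈ Metric.sphere (0 : ℂ) R := by simpa [habs] using hz
    have hPeq : P z = ((z - 0 + (w - 0)) / ((z - 0) - (w - 0))).re := rfl
    have hw0 := norm_nonneg w
    have hP3 : P z ≤ 3 := by
      rw [hPeq]
      refine (re_herglotzRieszKernel_le hz' hwb).trans ?_
      rw [sub_zero, div_le_iff₀ (by linarith)]
      linarith
    have hP0 : 0 ≤ P z := by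
      rw [hPeq]
      refine le_trans ?_ (le_re_herglotzRieszKernel hz' hwb)
      rw [sub_zero]
      exact div_nonneg (by linarith) (by linarith)
    have h1 : Real.log ‖f z‖ ≤ M := by
      have := hB₁ z
      rw [hzR] at this
      nlinarith
    have h2 : Real.log ‖g z‖ ≤ M := by
      have := hB₂ z
      rw [hzR] at this
      nlinarith
    simp only [Pi.smul_apply', Pi.smul_apply, smul_eq_mul]
    calc P z * (Real.log ‖f z‖ - Real.log ‖g z‖) ≤ P z * (M - Real.log ‖g z‖) :=
          mul_le_mul_of_nonneg_left (by linarith) hP0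
      _ ≤ 3 * (M - Real.log ‖g z‖) := mul_le_mul_of_nonneg_right hP3 (by linarith)
  rw [← hcongr, hP, Real.circleAverage_smul, Real.circleAverage_fun_sub (circleIntegrable_const M 0 R) hgi,
    Real.circleAverage_const, smul_eq_mul] at hle
  have hKR := hK R hR
  have : K ≤ K * (1 + R) := by nlinarith
  calc Real.log ‖q w‖ ≤ 3 * (M - Real.circleAverage (fun z => Real.log ‖g z‖) 0 R) := hle
    _ ≤ 3 * (M + K * (1 + R)) := by linarith
    _ ≤ (3 * (B₁ + B₂ + K) + 1) * (1 + R) := by rw [hM]; nlinarith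

/-- An entire function of linear growth is affine. -/
lemma affine_of_linear_growth (h : ℂ → ℂ) (hh : Differentiable ℂ h) (K : ℝ)
    (hK : ∀ z, ‖h z‖ ≤ K * (1 + ‖z‖)) : ∃ a b : ℂ, ∀ z, h z = a * z + b := by
  have hK0 : 0 ≤ K := by simpa using (norm_nonneg _).trans (hK 0)
  have hd : Differentiable ℂ (deriv h) := fun z => (hh.analyticAt z).deriv.differentiableAt
  have hb : ∀ z, ‖deriv h z‖ ≤ 3 * K := by
    intro z
    have hr : 0 < ‖z‖ + 1 := by positivity
    have := Complex.norm_deriv_le_of_forall_mem_sphere_norm_le (c := z) (R := ‖z‖ + 1)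
      (C := 3 * K * (‖z‖ + 1)) hr hh.diffContOnCl (fun x hx => by
        have h1 : ‖x - z‖ = ‖z‖ + 1 := by simpa [dist_eq_norm] using hx
        have h2 : ‖x‖ ≤ ‖x - z‖ + ‖z‖ := by simpa using norm_add_le (x - z) z
        refine (hK x).trans ?_
        rw [mul_comm 3 K, mul_assoc]
        apply mul_le_mul_of_nonneg_left _ hK0
        linarith [norm_nonneg z])
    rwa [mul_div_assoc, div_self hr.ne', mul_one] at this
  obtain ⟨a, ha⟩ := hd.exists_eq_const_of_bounded
    (isBounded_iff_forall_norm_le.mpr ⟨3 * K, by rintro _ ⟨z, rfl⟩; exact hb z⟩)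
  refine ⟨a, h 0, fun z => ?_⟩
  have hD : ∀ z, HasDerivAt (fun z => h z - a * z) 0 z := by
    intro z
    have h1 := (hh z).hasDerivAt
    rw [ha] at h1
    refine (h1.sub ((hasDerivAt_id z).const_mul a)).congr_deriv ?_
    simp
  have := is_const_of_deriv_eq_zero (fun z => (hD z).differentiableAt) (fun z => (hD z).deriv) z 0
  simp only [mul_zero, sub_zero] at this
  linear_combination this

lemma tendsto_exp_one (c b : ℂ)
    (h : Tendsto (fun r : ℝ => Complex.exp (c * r + b)) atTop (nhds 1)) :
    c = 0 ∧ Complex.exp b = 1 := by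
  have hshift : ∀ t : ℝ, Complex.exp (c * t) = 1 := by
    intro t
    have h1 : Tendsto (fun r : ℝ => Complex.exp (c * (r + t : ℝ) + b)) atTop (nhds 1) :=
      h.comp (tendsto_atTop_add_const_right _ t tendsto_id)
    have h2 : Tendsto (fun r : ℝ => Complex.exp (c * t) * Complex.exp (c * r + b)) atTop
        (nhds (Complex.exp (c * t) * 1)) := h.const_mul _
    have h3 : (fun r : ℝ => Complex.exp (c * (r + t : ℝ) + b)) =
        fun r : ℝ => Complex.exp (c * t) * Complex.exp (c * r + b) := by
      funext r
      rw [← Complex.exp_add]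
      congr 1
      push_cast
      ring
    rw [h3] at h1
    simpa using tendsto_nhds_unique h2 h1
  have hc : c = 0 := by
    have hd : HasDerivAt (fun t : ℝ => Complex.exp (c * t)) c 0 := by
      have := ((Complex.ofRealCLM.hasDerivAt (x := (0 : ℝ))).const_mul c).cexp
      simpa using this
    have hd' : HasDerivAt (fun t : ℝ => Complex.exp (c * t)) 0 0 := by
      simp only [hshift]
      exact hasDerivAt_const _ _
    exact hd.unique hd'
  refine ⟨hc, ?_⟩
  subst hc
  simp only [zero_mul, zero_add] at h
  exact tendsto_nhds_unique tendsto_const_nhds h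

/-- If two entire functions of exponential type at most 1 have exactly the same zeros
(with multiplicities, expressed via vanishing of iterated derivatives), neither identically
zero, and their ratio tends to 1 along some ray to infinity, then they are equal. -/
theorem stmt0 (f g : ℂ → ℂ)
    (hf : Differentiable ℂ f) (hg : Differentiable ℂ g)
    (hf0 : f ≠ 0) (hg0 : g ≠ 0)
    (hftype : ∃ C A : ℝ, ∀ z : ℂ, ‖f z‖ ≤ C * Real.exp (A * ‖z‖))
    (hgtype : ∃ C A : ℝ, ∀ z : ℂ, ‖g z‖ ≤ C * Real.exp (A * ‖z‖))
    (hzeros : ∀ z : ℂ, ∀ n : ℕ,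
      ((∀ k ≤ n, iteratedDeriv k f z = 0) ↔ (∀ k ≤ n, iteratedDeriv k g z = 0)))
    (hray : ∃ θ : ℝ, Tendsto (fun r : ℝ => f (r * Complex.exp (θ * Complex.I)) /
      g (r * Complex.exp (θ * Complex.I))) atTop (nhds 1)) :
    f = g := by
  obtain ⟨q, hq, hq0, hfq⟩ := exists_quotient f g hf hg hg0 hzeros
  obtain ⟨h, hh, hqh⟩ := exists_entire_log q hq hq0
  obtain ⟨K, hK0, hK⟩ := log_quotient_bound f g q hf hg hg0 hq hq0 hfq hftype hgtype
  have hre : ∀ z, (h z).re = Real.log ‖q z‖ := fun z => by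
    rw [hqh z, Complex.norm_exp, Real.log_exp]
  have hgrow : ∀ z, ‖h z‖ ≤ (10 * K + 3 * ‖h 0‖) * (1 + ‖z‖) := by
    intro z
    have hz := norm_nonneg z
    have hM : 0 < K * (1 + 4 * (1 + ‖z‖)) := by positivity
    have := Complex.borelCaratheodory (f := h) (R := 2 * (1 + ‖z‖)) (z := z) hM
      hh.differentiableOn (fun w hw => by
        rw [mem_ball_zero_iff] at hw
        change (h w).re ≤ _
        rw [hre]
        exact hK _ (by linarith) w (by linarith)) (by positivity)
      (by rw [mem_ball_zero_iff]; linarith)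
    have hden : 0 < 2 * (1 + ‖z‖) - ‖z‖ := by linarith
    refine this.trans ?_
    rw [← add_div, div_le_iff₀ hden]
    have h0 := norm_nonneg (h 0)
    nlinarith [mul_nonneg hK0.le hz, mul_nonneg h0 hz, mul_nonneg (mul_nonneg hK0.le hz) hz,
      mul_nonneg (mul_nonneg h0 hz) hz]
  obtain ⟨a, b, hab⟩ := affine_of_linear_growth h hh _ hgrow
  obtain ⟨θ, hθ⟩ := hray
  have hev : ∀ᶠ r : ℝ in atTop, f (r * Complex.exp (θ * Complex.I)) /
      g (r * Complex.exp (θ * Complex.I)) ≠ 0 := hθ.eventually_ne one_ne_zero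
  have hlim : Tendsto (fun r : ℝ => Complex.exp (a * Complex.exp (θ * Complex.I) * r + b))
      atTop (nhds 1) := by
    refine hθ.congr' ?_
    filter_upwards [hev] with r hr
    have hgr : g (r * Complex.exp (θ * Complex.I)) ≠ 0 := fun h0 => hr (by rw [h0, div_zero])
    rw [hfq, mul_div_cancel_right₀ _ hgr, hqh, hab]
    congr 1
    ring
  obtain ⟨hc, hb⟩ := tendsto_exp_one _ _ hlim
  have ha : a = 0 := by
    rcases mul_eq_zero.mp hc with h | h
    · exact h
    · exact absurd h (Complex.exp_ne_zero _)
  funext z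
  rw [hfq, hqh, hab, ha, zero_mul, zero_add, hb, one_mul]
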